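/- arXiv:1906.03861 — 4 statements merged into one kernel-verified Lean document; each statement's English description precedes it below -/
import Mathlib

section
/- Let s > 0 and a > 0, let I : ℂ → ℂ be measurable, and suppose the function x ↦ I(x)·S(x) is integrable on the closed disk {x : ‖x‖ ≤ a·s} and the function x ↦ I(s·x)·S(x) is integrable on the closed disk {x : ‖x‖ ≤ a}. Then ∫_{‖x‖ ≤ a} I(s·x)·S(x) dx = s^(m−2)·exp(−i·k·log s)·∫_{‖x‖ ≤ a·s} I(x)·S(x) dx. (Theorem 1: scale steerability of the cross-correlation of an image patch with a log-radial harmonic.) -/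
/-! Dilation by `s > 0` preserves arguments and multiplies norms by `s`, so away from the origin
`S (s * x) = s ^ (-m) * exp (i k log s) * S x` (`logRadialHarmonic_eq_mul_smul`). Hence the
left-hand integrand is, off the null set `{0}`, a constant times the dilate of `y ↦ I y * S y`, and
the change of variables `y = s * x`, of Jacobian `s ^ 2` on `ℂ`, gives the result. -/

open MeasureTheory Complex Real

/-- Distance between two angles in the circle ℝ/2πℤ. -/
noncomputable def circDist (φ ψ : ℝ) : ℝ :=
  dist (φ : AddCircle (2 * Real.pi)) (ψ : AddCircle (2 * Real.pi))

/-- Angular Gaussian kernel K(φ, ψ) = exp(−d(φ,ψ)²/(2σ²)). -/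
noncomputable def angKernel (σ φ ψ : ℝ) : ℝ :=
  Real.exp (-(circDist φ ψ) ^ 2 / (2 * σ ^ 2))

/-- The log-radial harmonic of order k and orientation φj:
S(x) = ‖x‖^(−m)·(K(arg x, φj) + K(arg x, φj + π))·exp(i·(k·log ‖x‖ + β)). -/
noncomputable def logRadialHarmonic (m k β φj σ : ℝ) (x : ℂ) : ℂ :=
  ((‖x‖ ^ (-m) : ℝ) : ℂ) *
    ((angKernel σ (Complex.arg x) φj + angKernel σ (Complex.arg x) (φj + Real.pi) : ℝ) : ℂ) *
    Complex.exp (Complex.I * ((k : ℂ) * (Real.log ‖x‖ : ℂ) + (β : ℂ)))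

/-- Homogeneity of the log-radial harmonic under positive dilations. The origin is excluded because
`Real.log 0 = 0` breaks the additivity of the logarithm there. -/
lemma logRadialHarmonic_eq_mul_smul (m k β φj σ : ℝ) {s : ℝ} (hs : 0 < s) {x : ℂ} (hx : x ≠ 0) :
    logRadialHarmonic m k β φj σ x =
      ((s ^ m : ℝ) : ℂ) * Complex.exp (-(Complex.I * (k : ℂ) * (Real.log s : ℂ))) *
        logRadialHarmonic m k β φj σ (s • x) := by
  have hx' : 0 < ‖x‖ := norm_pos_iff.mpr hx
  have hn : ‖s • x‖ = s * ‖x‖ := by rw [norm_smul, Real.norm_of_nonneg hs.le]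
  have harg : Complex.arg (s • x) = Complex.arg x := by
    rw [Complex.real_smul, Complex.arg_real_mul x hs]
  have hpow : ‖x‖ ^ (-m) = s ^ m * (s * ‖x‖) ^ (-m) := by
    rw [Real.mul_rpow hs.le hx'.le, ← mul_assoc, ← Real.rpow_add hs, add_neg_cancel,
      Real.rpow_zero, one_mul]
  have hexp : Complex.exp (Complex.I * ((k : ℂ) * (Real.log ‖x‖ : ℂ) + (β : ℂ))) =
      Complex.exp (-(Complex.I * (k : ℂ) * (Real.log s : ℂ))) *
        Complex.exp (Complex.I * ((k : ℂ) * (Real.log (s * ‖x‖) : ℂ) + (β : ℂ))) := by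
    rw [← Complex.exp_add, Real.log_mul hs.ne' hx'.ne', Complex.ofReal_add]
    congr 1
    ring
  unfold logRadialHarmonic
  rw [hn, harg, hpow, hexp, Complex.ofReal_mul]
  ring

open scoped Pointwise in
/-- Change of variables `y = s * x` from the disk of radius `a` to the disk of radius `a * s`. -/
lemma setIntegral_closedBall_comp_smul (f : ℂ → ℂ) {s a : ℝ} (hs : 0 < s) (ha : 0 < a) :
    ∫ x in Metric.closedBall (0 : ℂ) a, f (s • x) =
      (((s ^ 2)⁻¹ : ℝ) : ℂ) * ∫ x in Metric.closedBall (0 : ℂ) (a * s), f x := by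
  have hball : s • Metric.closedBall (0 : ℂ) a = Metric.closedBall (0 : ℂ) (a * s) := by
    rw [_root_.smul_closedBall s (0 : ℂ) ha.le, smul_zero, Real.norm_of_nonneg hs.le, mul_comm]
  rw [Measure.setIntegral_comp_smul_of_pos volume f _ hs, hball, Complex.finrank_real_complex,
    Complex.real_smul]

/-- Theorem 1 (scale steerability over a disk): for s, a > 0 and measurable I with the
stated integrability, ∫_{‖x‖ ≤ a} I(s·x)·S(x) dx
  = s^(m−2)·exp(−i·k·log s)·∫_{‖x‖ ≤ a·s} I(x)·S(x) dx. -/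
theorem scale_steerability_disk
    (m k β φj σ : ℝ) (hσ : 0 < σ)
    (s a : ℝ) (hs : 0 < s) (ha : 0 < a)
    (I : ℂ → ℂ) (hI : Measurable I)
    (h₁ : IntegrableOn (fun x => I x * logRadialHarmonic m k β φj σ x)
      (Metric.closedBall (0 : ℂ) (a * s)) volume)
    (h₂ : IntegrableOn (fun x => I ((s : ℂ) * x) * logRadialHarmonic m k β φj σ x)
      (Metric.closedBall (0 : ℂ) a) volume) :
    ∫ x in Metric.closedBall (0 : ℂ) a, I ((s : ℂ) * x) * logRadialHarmonic m k β φj σ x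
      = ((s ^ (m - 2) : ℝ) : ℂ) * Complex.exp (-(Complex.I * (k : ℂ) * (Real.log s : ℂ))) *
        ∫ x in Metric.closedBall (0 : ℂ) (a * s), I x * logRadialHarmonic m k β φj σ x := by
  have hpow : s ^ (m - 2) = s ^ m * (s ^ 2)⁻¹ := by
    rw [Real.rpow_sub hs, Real.rpow_two, div_eq_mul_inv]
  have hcov := setIntegral_closedBall_comp_smul
    (fun x => I x * logRadialHarmonic m k β φj σ x) hs ha
  calc
    _ = ∫ x in Metric.closedBall (0 : ℂ) a,
        (((s ^ m : ℝ) : ℂ) * Complex.exp (-(Complex.I * (k : ℂ) * (Real.log s : ℂ)))) *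
          (I (s • x) * logRadialHarmonic m k β φj σ (s • x)) := by
      refine integral_congr_ae (ae_restrict_of_ae ?_)
      filter_upwards [Measure.ae_ne volume (0 : ℂ)] with x hx
      rw [logRadialHarmonic_eq_mul_smul m k β φj σ hs hx, Complex.real_smul]
      ring
    _ = _ := by
      rw [integral_const_mul, hcov, hpow, Complex.ofReal_mul]
      ring
end

section
/- Let s > 0 and let I : ℂ → ℂ be measurable, and suppose both x ↦ I(x)·S(x) and x ↦ I(s·x)·S(x) are integrable on ℂ. Then ∫_ℂ I(s·x)·S(x) dx = s^(m−2)·exp(−i·k·log s)·∫_ℂ I(x)·S(x) dx. (The a = ∞ form of the scale-steerability theorem.) -/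
/-!
Positive dilations preserve `arg`, so off the origin the harmonic `S` is an eigenfunction of
`x ↦ s * x` with eigenvalue `s ^ (-m) * exp (i k log s)` (`logRadialHarmonic_mul`). Hence the
integrand on the left is, almost everywhere, `s ^ m * exp (-i k log s)` times the function
`y ↦ I y * S y` evaluated at `y = s * x`; the change of variables `y = s * x` in the real
plane contributes the Jacobian factor `s ^ (-2)`.
-/

open MeasureTheory Complex Real

lemma logRadialHarmonic_mul (m k β φj σ : ℝ) {s : ℝ} (hs : 0 < s) {x : ℂ} (hx : x ≠ 0) :
    logRadialHarmonic m k β φj σ ((s : ℂ) * x) =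
      ((s ^ (-m) : ℝ) : ℂ) * Complex.exp (Complex.I * (k : ℂ) * (Real.log s : ℂ)) *
        logRadialHarmonic m k β φj σ x := by
  have hx' : ‖x‖ ≠ 0 := norm_ne_zero_iff.mpr hx
  have hn : ‖(s : ℂ) * x‖ = s * ‖x‖ := by
    rw [norm_mul, Complex.norm_real, Real.norm_of_nonneg hs.le]
  have hexp : Complex.exp (Complex.I * ((k : ℂ) * ((Real.log s + Real.log ‖x‖ : ℝ) : ℂ) + (β : ℂ)))
      = Complex.exp (Complex.I * (k : ℂ) * (Real.log s : ℂ)) *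
        Complex.exp (Complex.I * ((k : ℂ) * (Real.log ‖x‖ : ℂ) + (β : ℂ))) := by
    rw [← Complex.exp_add]
    push_cast
    ring_nf
  unfold logRadialHarmonic
  rw [hn, Complex.arg_real_mul x hs, Real.mul_rpow hs.le (norm_nonneg x),
    Real.log_mul hs.ne' hx', hexp, Complex.ofReal_mul]
  ring

/-- The a = ∞ form of the scale-steerability theorem: for s > 0 and measurable I with the
stated integrability, ∫_ℂ I(s·x)·S(x) dx = s^(m−2)·exp(−i·k·log s)·∫_ℂ I(x)·S(x) dx. -/
theorem scale_steerability_global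
    (m k β φj σ : ℝ) (hσ : 0 < σ)
    (s : ℝ) (hs : 0 < s)
    (I : ℂ → ℂ) (hI : Measurable I)
    (h₁ : Integrable (fun x => I x * logRadialHarmonic m k β φj σ x) volume)
    (h₂ : Integrable (fun x => I ((s : ℂ) * x) * logRadialHarmonic m k β φj σ x) volume) :
    ∫ x : ℂ, I ((s : ℂ) * x) * logRadialHarmonic m k β φj σ x
      = ((s ^ (m - 2) : ℝ) : ℂ) * Complex.exp (-(Complex.I * (k : ℂ) * (Real.log s : ℂ))) *
        ∫ x : ℂ, I x * logRadialHarmonic m k β φj σ x := by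
  have hae : (fun x : ℂ => I ((s : ℂ) * x) * logRadialHarmonic m k β φj σ x) =ᵐ[volume]
      fun x => (((s ^ m : ℝ) : ℂ) * Complex.exp (-(Complex.I * (k : ℂ) * (Real.log s : ℂ)))) *
        (I (s • x) * logRadialHarmonic m k β φj σ (s • x)) := by
    filter_upwards [Measure.ae_ne volume (0 : ℂ)] with x hx
    have hpow : ((s ^ m : ℝ) : ℂ) * ((s ^ (-m) : ℝ) : ℂ) = 1 := by
      rw [← Complex.ofReal_mul, ← Real.rpow_add hs, add_neg_cancel, Real.rpow_zero,
        Complex.ofReal_one]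
    have hphase : Complex.exp (-(Complex.I * (k : ℂ) * (Real.log s : ℂ))) *
        Complex.exp (Complex.I * (k : ℂ) * (Real.log s : ℂ)) = 1 := by
      rw [← Complex.exp_add, neg_add_cancel, Complex.exp_zero]
    rw [Complex.real_smul, logRadialHarmonic_mul m k β φj σ hs hx]
    generalize Complex.exp (-(Complex.I * (k : ℂ) * (Real.log s : ℂ))) = a at *
    generalize Complex.exp (Complex.I * (k : ℂ) * (Real.log s : ℂ)) = b at *
    linear_combination (-(I (s * x) * logRadialHarmonic m k β φj σ x)) *
      (a * b * hpow + hphase)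
  have hjac : s ^ (m - 2) = s ^ m * (s ^ 2)⁻¹ := by
    rw [Real.rpow_sub hs, Real.rpow_two, div_eq_mul_inv]
  rw [integral_congr_ae hae, integral_const_mul,
    Measure.integral_comp_smul_of_nonneg volume
      (fun y => I y * logRadialHarmonic m k β φj σ y) s (hR := hs.le),
    Complex.finrank_real_complex, Complex.real_smul, hjac, Complex.ofReal_mul]
  ring
end

section
/- For every s > 0 and every x ∈ ℂ with x ≠ 0, the log-radial harmonic satisfies S(s⁻¹·x) = s^m·exp(−i·k·log s)·S(x). In particular, scaling the filter's argument by a positive factor multiplies the filter by a complex scalar, so the filter is exactly steerable in scale. -/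
/-!
Multiplication by the positive real `s⁻¹` leaves the argument of `x`, hence the angular factor,
unchanged and turns `‖x‖` into `s⁻¹ * ‖x‖`. Up to the constant phase `exp (I * β)`, the radial
factors are characters of the multiplicative
group of positive reals: the power `r ^ (-m)` contributes `s ^ m`, and since `log` is additive the
phase `exp (I * (k * log r + β))` contributes `exp (-(I * k * log s))`.
-/

open MeasureTheory Complex Real

/-- Exact scale steerability of a log-radial harmonic: for every s > 0 and x ≠ 0,
S(s⁻¹·x) = s^m·exp(−i·k·log s)·S(x). -/
theorem logRadialHarmonic_scale_steer
    (m k β φj σ : ℝ) (hσ : 0 < σ)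
    (s : ℝ) (hs : 0 < s) (x : ℂ) (hx : x ≠ 0) :
    logRadialHarmonic m k β φj σ (((s : ℂ))⁻¹ * x)
      = ((s ^ m : ℝ) : ℂ) * Complex.exp (-(Complex.I * (k : ℂ) * (Real.log s : ℂ))) *
        logRadialHarmonic m k β φj σ x := by
  have hs' : 0 < s⁻¹ := inv_pos.mpr hs
  have hxn : 0 < ‖x‖ := norm_pos_iff.mpr hx
  have hcast : ((s : ℂ))⁻¹ * x = ((s⁻¹ : ℝ) : ℂ) * x := by push_cast; rfl
  have harg : Complex.arg (((s : ℂ))⁻¹ * x) = Complex.arg x := by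
    rw [hcast, Complex.arg_real_mul x hs']
  have hnorm : ‖((s : ℂ))⁻¹ * x‖ = s⁻¹ * ‖x‖ := by
    rw [hcast, norm_mul, Complex.norm_real, Real.norm_of_nonneg hs'.le]
  have hpow : (s⁻¹ * ‖x‖) ^ (-m) = s ^ m * ‖x‖ ^ (-m) := by
    rw [Real.mul_rpow hs'.le hxn.le, Real.inv_rpow hs.le, Real.rpow_neg hs.le, inv_inv]
  have hlog : Real.log (s⁻¹ * ‖x‖) = Real.log ‖x‖ - Real.log s := by
    rw [Real.log_mul hs'.ne' hxn.ne', Real.log_inv]; ring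
  have hexp : Complex.exp (Complex.I * ((k : ℂ) * (Real.log (s⁻¹ * ‖x‖) : ℂ) + (β : ℂ)))
      = Complex.exp (-(Complex.I * (k : ℂ) * (Real.log s : ℂ))) *
        Complex.exp (Complex.I * ((k : ℂ) * (Real.log ‖x‖ : ℂ) + (β : ℂ))) := by
    rw [← Complex.exp_add, hlog, Complex.ofReal_sub]
    congr 1
    ring
  unfold logRadialHarmonic
  rw [harg, hnorm, hpow, hexp, Complex.ofReal_mul]
  ring
end

section
/- Let (k_i)_{i ∈ F} be a finite family of real orders, (φ_j)_{j ∈ G} a finite family of orientations, (c_{ij}) complex coefficients, and W = Σ_{i,j} c_{ij}·S^{k_i, j} the combined filter. Let s > 0, a > 0, and let I : ℂ → ℂ be measurable such that x ↦ I(x)·S^{k_i, j}(x) is integrable on the disk {x : ‖x‖ ≤ a·s} for every i, j, and x ↦ I(s·x)·S^{k_i,j}(x) is integrable on the disk {x : ‖x‖ ≤ a} for every i, j. Then ∫_{‖x‖ ≤ a} I(s·x)·W(x) dx = s^(m−2)·Σ_{i ∈ F} exp(−i·k_i·log s)·Σ_{j ∈ G} c_{ij}·∫_{‖y‖ ≤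 a·s} I(y)·S^{k_i, j}(y) dy. That is, the response of the scaled image to any learnt filter built from the basis can be computed exactly from the basis responses to the unscaled image by complex linear steering. -/
/-!
Each harmonic is homogeneous up to a phase under dilations: away from the origin,
`S^{k,j}(s x) = s^(-m) exp(i k log s) S^{k,j}(x)`, because the argument is dilation invariant while
`log ‖s x‖ = log s + log ‖x‖` (`logRadialHarmonic_steer`). The substitution `y = s x`, whose
Jacobian in the plane is `s²`, therefore turns the response of the dilated image to `S^{k,j}` into
`s^(m-2) exp(-i k log s)` times its response to the original image (`integral_response_steer`).
Linearity of the integral extends this to finite linear combinations; the integrability of each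
summand is what allows the integral and the sums to be exchanged.
-/

open MeasureTheory Complex Real

/-- Dilation law of a harmonic. The origin is excluded: for `m = 0` the conventions `0 ^ 0 = 1` and
`log 0 = 0` make the harmonic nonzero there, so the law fails unless the phase factor is `1`. -/
lemma logRadialHarmonic_steer (m k β φj σ : ℝ) {s : ℝ} (hs : 0 < s) {x : ℂ} (hx : x ≠ 0) :
    logRadialHarmonic m k β φj σ x =
      ((s ^ m : ℝ) : ℂ) * Complex.exp (-(Complex.I * (k : ℂ) * (Real.log s : ℂ))) *
        logRadialHarmonic m k β φj σ ((s : ℂ) * x) := by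
  have hx' : 0 < ‖x‖ := norm_pos_iff.mpr hx
  have hnorm : ‖(s : ℂ) * x‖ = s * ‖x‖ := by
    rw [norm_mul, Complex.norm_real, Real.norm_of_nonneg hs.le]
  have hpow : ‖x‖ ^ (-m) = s ^ m * (s * ‖x‖) ^ (-m) := by
    rw [Real.mul_rpow hs.le hx'.le, ← mul_assoc, ← Real.rpow_add hs, add_neg_cancel,
      Real.rpow_zero, one_mul]
  have hexp : Complex.exp (Complex.I * ((k : ℂ) * (Real.log ‖x‖ : ℂ) + (β : ℂ))) =
      Complex.exp (-(Complex.I * (k : ℂ) * (Real.log s : ℂ))) *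
        Complex.exp (Complex.I * ((k : ℂ) * (Real.log (s * ‖x‖) : ℂ) + (β : ℂ))) := by
    rw [← Complex.exp_add, Real.log_mul hs.ne' hx'.ne']
    congr 1
    push_cast
    ring
  simp only [logRadialHarmonic]
  rw [hnorm, Complex.arg_real_mul x hs, hexp, hpow]
  push_cast
  ring

open scoped Pointwise in
/-- Steering of the response to a single harmonic. No integrability is needed, since the change of
variables under a dilation also holds for the default value of a non-convergent integral. -/
lemma integral_response_steer (m k β φj σ : ℝ) {s a : ℝ} (hs : 0 < s) (I : ℂ → ℂ) :
    ∫ x in Metric.closedBall (0 : ℂ) a, I ((s : ℂ) * x) * logRadialHarmonic m k β φj σ x =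
      ((s ^ (m - 2) : ℝ) : ℂ) * Complex.exp (-(Complex.I * (k : ℂ) * (Real.log s : ℂ))) *
        ∫ y in Metric.closedBall (0 : ℂ) (a * s), I y * logRadialHarmonic m k β φj σ y := by
  have hball : s • Metric.closedBall (0 : ℂ) a = Metric.closedBall (0 : ℂ) (a * s) := by
    rw [smul_closedBall' hs.ne', smul_zero, Real.norm_of_nonneg hs.le, mul_comm]
  have hdil := Measure.setIntegral_comp_smul_of_pos (volume : Measure ℂ)
    (fun y => I y * logRadialHarmonic m k β φj σ y) (Metric.closedBall (0 : ℂ) a) hs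
  rw [hball, Complex.finrank_real_complex] at hdil
  simp only [Complex.real_smul] at hdil
  have hsm : s ^ (m - 2) = s ^ m * (s ^ 2)⁻¹ := by
    rw [Real.rpow_sub hs, Real.rpow_two, div_eq_mul_inv]
  calc _ = ∫ x in Metric.closedBall (0 : ℂ) a,
        (((s ^ m : ℝ) : ℂ) * Complex.exp (-(Complex.I * (k : ℂ) * (Real.log s : ℂ)))) *
          (I ((s : ℂ) * x) * logRadialHarmonic m k β φj σ ((s : ℂ) * x)) := by
        refine integral_congr_ae (ae_restrict_of_ae ?_)
        filter_upwards [Measure.ae_ne volume (0 : ℂ)] with x hx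
        rw [logRadialHarmonic_steer m k β φj σ hs hx]
        ring
    _ = _ := by
        rw [integral_const_mul, hdil, hsm]
        push_cast
        ring

/-- Steering of the response of a learnt filter W = Σᵢⱼ cᵢⱼ·S^{kᵢ,j}:
∫_{‖x‖ ≤ a} I(s·x)·W(x) dx
  = s^(m−2)·Σᵢ exp(−i·kᵢ·log s)·Σⱼ cᵢⱼ·∫_{‖y‖ ≤ a·s} I(y)·S^{kᵢ,j}(y) dy. -/
theorem linear_combination_response_steer
    (m β σ : ℝ) (hσ : 0 < σ)
    {F G : Type*} [Fintype F] [Fintype G]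
    (k : F → ℝ) (φ : G → ℝ) (c : F → G → ℂ)
    (W : ℂ → ℂ)
    (hW : ∀ x : ℂ, x ≠ 0 →
      W x = ∑ i : F, ∑ j : G, c i j * logRadialHarmonic m (k i) β (φ j) σ x)
    (s a : ℝ) (hs : 0 < s) (ha : 0 < a)
    (I : ℂ → ℂ) (hI : Measurable I)
    (h₁ : ∀ (i : F) (j : G),
      IntegrableOn (fun x => I x * logRadialHarmonic m (k i) β (φ j) σ x)
        (Metric.closedBall (0 : ℂ) (a * s)) volume)
    (h₂ : ∀ (i : F) (j : G),
      IntegrableOn (fun x => I ((s : ℂ) * x) * logRadialHarmonic m (k i) β (φ j) σ x)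
        (Metric.closedBall (0 : ℂ) a) volume) :
    ∫ x in Metric.closedBall (0 : ℂ) a, I ((s : ℂ) * x) * W x
      = ((s ^ (m - 2) : ℝ) : ℂ) *
        ∑ i : F, Complex.exp (-(Complex.I * (k i : ℂ) * (Real.log s : ℂ))) *
          ∑ j : G, c i j *
            ∫ y in Metric.closedBall (0 : ℂ) (a * s),
              I y * logRadialHarmonic m (k i) β (φ j) σ y := by
  have hlin : ∫ x in Metric.closedBall (0 : ℂ) a, I ((s : ℂ) * x) * W x =
      ∫ x in Metric.closedBall (0 : ℂ) a, ∑ i : F, ∑ j : G,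
        c i j * (I ((s : ℂ) * x) * logRadialHarmonic m (k i) β (φ j) σ x) := by
    -- `W` is only prescribed off the origin, a null set.
    refine integral_congr_ae (ae_restrict_of_ae ?_)
    filter_upwards [Measure.ae_ne volume (0 : ℂ)] with x hx
    simp only [hW x hx, Finset.mul_sum, mul_left_comm]
  have hint : ∀ i j, Integrable
      (fun x => c i j * (I ((s : ℂ) * x) * logRadialHarmonic m (k i) β (φ j) σ x))
      (volume.restrict (Metric.closedBall (0 : ℂ) a)) :=
    fun i j => (h₂ i j).const_mul (c i j)
  rw [hlin, integral_finsetSum _ fun i _ => integrable_finsetSum _ fun j _ => hint i j,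
    Finset.mul_sum]
  refine Finset.sum_congr rfl fun i _ => ?_
  rw [integral_finsetSum _ fun j _ => hint i j, Finset.mul_sum, Finset.mul_sum]
  refine Finset.sum_congr rfl fun j _ => ?_
  rw [integral_const_mul, integral_response_steer m (k i) β (φ j) σ hs I]
  ring
end
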